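/- Let Ω₀ ⊆ ℝ² be a nonempty connected open set and let φ : Ω₀ → ℝ be twice continuously differentiable on Ω₀. Suppose that Δφ + 2 = 0 on Ω₀ and that φ + ½|∇φ|² is constant on Ω₀. Then there exist a constant vector u₀ ∈ ℝ² and a constant k ∈ ℝ such that φ(ξ) = −½|ξ|² + u₀·ξ + k for all ξ ∈ Ω₀. -/

import Mathlib

open Set Filter

/-- First partial derivative in the `ξ₁`-direction. -/
noncomputable def pd1 (φ : ℝ × ℝ → ℝ) (p : ℝ × ℝ) : ℝ :=
  deriv (fun x => φ (x, p.2)) p.1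

/-- First partial derivative in the `ξ₂`-direction. -/
noncomputable def pd2 (φ : ℝ × ℝ → ℝ) (p : ℝ × ℝ) : ℝ :=
  deriv (fun y => φ (p.1, y)) p.2

/-! Let `g = ∇φ` and let `u(ξ) = g(ξ) + ξ` be the velocity. Its derivative `Du = D²φ + 1` is
symmetric and, as `Δφ = -2`, traceless, while differentiating the pseudo-Bernoulli law gives
`Du · g = 0`. A traceless symmetric `2 × 2` matrix squares to a nonnegative multiple of the
identity, so it is either zero or invertible: at every point `Du = 0` or `g = 0`. If `Du` were
nonzero at some point, it would be nonzero nearby, so `g` would vanish nearby, and hence `Δφ = 0`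
there, contradicting `Δφ = -2`. Thus `u` is a constant `u₀`, and integrating `∇φ = u₀ - ξ` gives
the formula.
-/

open scoped Topology

theorem fderiv_eq_of_eventually_fderiv_eq_or_eq_const {𝕜 E F : Type*} [NontriviallyNormedField 𝕜]
    [NormedAddCommGroup E] [NormedSpace 𝕜 E] [NormedAddCommGroup F] [NormedSpace 𝕜 F]
    {g : E → F} {p : E} {A : E →L[𝕜] F} {c : F} (hcont : ContinuousAt (fderiv 𝕜 g) p)
    (hor : ∀ᶠ q in 𝓝 p, fderiv 𝕜 g q = A ∨ g q = c) (hne : fderiv 𝕜 g p ≠ 0) :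
    fderiv 𝕜 g p = A := by
  by_contra hA
  have hconst : g =ᶠ[𝓝 p] fun _ => c := by
    filter_upwards [hor, hcont.eventually_ne hA] with q hq hqA using hq.resolve_left hqA
  exact hne (by rw [hconst.fderiv_eq, fderiv_const_apply])

section SymmetricForm

variable {E : Type*} [NormedAddCommGroup E] [NormedSpace ℝ E] {B : E →L[ℝ] E →L[ℝ] ℝ}
  {φ : E → ℝ} {g : E → E} {g' : E →L[ℝ] E} {p : E}

theorem hasFDerivAt_apply_self_div_two {G : Type*} [NormedAddCommGroup G] [NormedSpace ℝ G]
    {f : G → E} {f' : G →L[ℝ] E} {x : G} (hB : ∀ v w, B v w = B w v) (hf : HasFDerivAt f f' x) :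
    HasFDerivAt (fun y => B (f y) (f y) / 2) (B (f x) ∘L f') x := by
  have hBf : HasFDerivAt (fun y => B (f y)) (B ∘L f') x := B.hasFDerivAt.comp x hf
  simp only [div_eq_inv_mul]
  refine ((hBf.clm_apply hf).const_mul 2⁻¹).congr_fderiv ?_
  ext v
  simp only [smul_add, add_apply, smul_apply, ContinuousLinearMap.comp_apply, smul_eq_mul,
    ContinuousLinearMap.flip_apply, hB (f' v) (f x)]
  ring

theorem apply_add_fderiv_eq_zero_of_bernoulli {c : ℝ} (hB : ∀ v w, B v w = B w v)
    (hφ : HasFDerivAt φ (B (g p)) p) (hg : HasFDerivAt g g' p)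
    (hbern : ∀ᶠ q in 𝓝 p, φ q + B (g q) (g q) / 2 = c) (v : E) :
    B (g p) (g' v + v) = 0 := by
  have hsum := hφ.add (hasFDerivAt_apply_self_div_two hB hg)
  have hzero := hsum.unique ((hasFDerivAt_const c p).congr_of_eventuallyEq hbern)
  simpa [add_comm] using DFunLike.congr_fun hzero v

theorem exists_eq_quadratic_of_hasFDerivAt_neg_id {s : Set E} (hB : ∀ v w, B v w = B w v)
    (hs : IsOpen s) (hconn : IsPreconnected s) (hφ : ∀ p ∈ s, HasFDerivAt φ (B (g p)) p)
    (hg : ∀ p ∈ s, HasFDerivAt g (-ContinuousLinearMap.id ℝ E) p) :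
    ∃ u k, ∀ p ∈ s, φ p = -B p p / 2 + B u p + k := by
  have hvel : ∀ p ∈ s, HasFDerivAt (fun q => g q + q) (0 : E →L[ℝ] E) p := fun p hp =>
    ((hg p hp).add (hasFDerivAt_id p)).congr_fderiv (neg_add_cancel _)
  obtain ⟨u, hu⟩ := hs.exists_is_const_of_fderiv_eq_zero hconn
    (fun p hp => (hvel p hp).differentiableAt.differentiableWithinAt) fun p hp => (hvel p hp).fderiv
  have hrem : ∀ p ∈ s, HasFDerivAt (fun q => φ q + B q q / 2 - B u q) (0 : E →L[ℝ] ℝ) p := by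
    intro p hp
    refine (((hφ p hp).add (hasFDerivAt_apply_self_div_two hB (hasFDerivAt_id p))).sub
      (B u).hasFDerivAt).congr_fderiv ?_
    ext v
    simp [← hu p hp]
  obtain ⟨k, hk⟩ := hs.exists_is_const_of_fderiv_eq_zero hconn
    (fun p hp => (hrem p hp).differentiableAt.differentiableWithinAt) fun p hp => (hrem p hp).fderiv
  exact ⟨u, k, fun p hp => by linear_combination hk p hp⟩

end SymmetricForm

theorem eq_zero_or_eq_zero_of_symmetric_of_traceless {K : Type*} [Field K] [LinearOrder K]
    [IsStrictOrderedRing K] {A : K × K →ₗ[K] K × K} {w : K × K}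
    (hsymm : (A (1, 0)).2 = (A (0, 1)).1) (htrace : (A (1, 0)).1 + (A (0, 1)).2 = 0)
    (hw : A w = 0) : A = 0 ∨ w = 0 := by
  obtain ⟨a, ha⟩ : ∃ a, (A (1, 0)).1 = a := ⟨_, rfl⟩
  obtain ⟨b, hb⟩ : ∃ b, (A (0, 1)).1 = b := ⟨_, rfl⟩
  have he₁ : A (1, 0) = (a, b) := Prod.ext ha (hsymm.trans hb)
  have he₂ : A (0, 1) = (b, -a) := Prod.ext hb (by linear_combination htrace - ha)
  have hA : ∀ v, A v = (a * v.1 + b * v.2, b * v.1 - a * v.2) := fun v => by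
    have hv : v = v.1 • ((1 : K), (0 : K)) + v.2 • ((0 : K), (1 : K)) := by simp
    rw [hv, map_add, map_smul, map_smul, he₁, he₂]
    ext <;> simp only [Prod.smul_mk, smul_eq_mul, Prod.mk_add_mk] <;> ring
  have hsq : (a ^ 2 + b ^ 2) • w = A (A w) := by
    ext <;> simp only [Prod.smul_fst, Prod.smul_snd, smul_eq_mul, hA] <;> ring
  rw [hw, map_zero, smul_eq_zero] at hsq
  refine hsq.imp_left fun hab => ?_
  obtain ⟨ha0, hb0⟩ : a = 0 ∧ b = 0 := by
    simpa [add_eq_zero_iff_of_nonneg (sq_nonneg a) (sq_nonneg b)] using hab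
  exact LinearMap.ext fun v => by simp [hA, ha0, hb0]

/-- The Euclidean inner product on `ℝ × ℝ` as a continuous bilinear form, needed because the norm
that Mathlib puts on `ℝ × ℝ` is the sup norm. -/
noncomputable def euclideanForm : ℝ × ℝ →L[ℝ] ℝ × ℝ →L[ℝ] ℝ :=
  (ContinuousLinearMap.mul ℝ ℝ).bilinearComp (.fst ℝ ℝ ℝ) (.fst ℝ ℝ ℝ) +
    (ContinuousLinearMap.mul ℝ ℝ).bilinearComp (.snd ℝ ℝ ℝ) (.snd ℝ ℝ ℝ)

@[simp]
theorem euclideanForm_apply (v w : ℝ × ℝ) : euclideanForm v w = v.1 * w.1 + v.2 * w.2 := rfl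

theorem euclideanForm_comm (v w : ℝ × ℝ) : euclideanForm v w = euclideanForm w v := by
  simp [mul_comm]

/-- The gradient `∇φ` as a vector field on `ℝ × ℝ`. Mathlib's `gradient` needs an inner product
space, which `ℝ × ℝ` is not. -/
noncomputable def grad (φ : ℝ × ℝ → ℝ) (p : ℝ × ℝ) : ℝ × ℝ := (pd1 φ p, pd2 φ p)

section Grad

variable {φ : ℝ × ℝ → ℝ} {s : Set (ℝ × ℝ)} {p : ℝ × ℝ}

theorem pd1_eq_fderiv (hφ : DifferentiableAt ℝ φ p) : pd1 φ p = fderiv ℝ φ p (1, 0) :=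
  (hφ.hasFDerivAt.comp_hasDerivAt p.1
    ((hasDerivAt_id p.1).prodMk (hasDerivAt_const p.1 p.2))).deriv

theorem pd2_eq_fderiv (hφ : DifferentiableAt ℝ φ p) : pd2 φ p = fderiv ℝ φ p (0, 1) :=
  (hφ.hasFDerivAt.comp_hasDerivAt p.2
    ((hasDerivAt_const p.2 p.1).prodMk (hasDerivAt_id p.2))).deriv

theorem hasFDerivAt_euclideanForm_grad (hφ : DifferentiableAt ℝ φ p) :
    HasFDerivAt φ (euclideanForm (grad φ p)) p := by
  refine hφ.hasFDerivAt.congr_fderiv ?_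
  ext <;> simp [grad, pd1_eq_fderiv hφ, pd2_eq_fderiv hφ]

theorem contDiffOn_grad {m n : WithTop ℕ∞} (hs : IsOpen s) (hφ : ContDiffOn ℝ n φ s)
    (hmn : m + 1 ≤ n) : ContDiffOn ℝ m (grad φ) s := by
  have hdiff : ∀ q ∈ s, DifferentiableAt ℝ φ q := fun q hq =>
    (hφ.contDiffAt (hs.mem_nhds hq)).differentiableAt
      (ne_of_gt (lt_of_lt_of_le (by simp) (le_add_self.trans hmn)))
  have hfderiv : ContDiffOn ℝ m (fderiv ℝ φ) s := hφ.fderiv_of_isOpen hs hmn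
  refine ((hfderiv.clm_apply (contDiffOn_const (c := (1, 0)))).prodMk
    (hfderiv.clm_apply (contDiffOn_const (c := (0, 1))))).congr fun q hq => ?_
  rw [grad, pd1_eq_fderiv (hdiff q hq), pd2_eq_fderiv (hdiff q hq)]

theorem fderiv_grad_symm (hφ : ∀ᶠ q in 𝓝 p, DifferentiableAt ℝ φ q)
    (hgrad : DifferentiableAt ℝ (grad φ) p) (v w : ℝ × ℝ) :
    euclideanForm (fderiv ℝ (grad φ) p v) w = euclideanForm (fderiv ℝ (grad φ) p w) v :=
  second_derivative_symmetric_of_eventually (hφ.mono fun _ => hasFDerivAt_euclideanForm_grad)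
    (euclideanForm.hasFDerivAt.comp p hgrad.hasFDerivAt) v w

theorem pd1_pd1_add_pd2_pd2_eq_div_grad (hgrad : DifferentiableAt ℝ (grad φ) p) :
    pd1 (pd1 φ) p + pd2 (pd2 φ) p =
      (fderiv ℝ (grad φ) p (1, 0)).1 + (fderiv ℝ (grad φ) p (0, 1)).2 := by
  have hpd1 : HasFDerivAt (pd1 φ) _ p := hgrad.hasFDerivAt.fst
  have hpd2 : HasFDerivAt (pd2 φ) _ p := hgrad.hasFDerivAt.snd
  rw [pd1_eq_fderiv hpd1.differentiableAt, pd2_eq_fderiv hpd2.differentiableAt, hpd1.fderiv,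
    hpd2.fderiv]
  rfl

theorem fderiv_grad_eq_neg_id_or_grad_eq_zero {c : ℝ}
    (hφ : ∀ᶠ q in 𝓝 p, DifferentiableAt ℝ φ q) (hgrad : DifferentiableAt ℝ (grad φ) p)
    (hlap : pd1 (pd1 φ) p + pd2 (pd2 φ) p + 2 = 0)
    (hbern : ∀ᶠ q in 𝓝 p, φ q + euclideanForm (grad φ q) (grad φ q) / 2 = c) :
    fderiv ℝ (grad φ) p = -.id ℝ (ℝ × ℝ) ∨ grad φ p = 0 := by
  set A := fderiv ℝ (grad φ) p + .id ℝ (ℝ × ℝ) with hA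
  have hsymm : ∀ v w, euclideanForm (A v) w = euclideanForm (A w) v := fun v w => by
    simp only [hA, add_apply, map_add, ContinuousLinearMap.id_apply,
      fderiv_grad_symm hφ hgrad v w, euclideanForm_comm v w]
  have htrace : (A (1, 0)).1 + (A (0, 1)).2 = 0 := by
    rw [pd1_pd1_add_pd2_pd2_eq_div_grad hgrad] at hlap
    simp only [hA, add_apply, ContinuousLinearMap.id_apply, Prod.fst_add, Prod.snd_add]
    linear_combination hlap
  have hker : A (grad φ p) = 0 := by
    have horth : ∀ v, euclideanForm (A (grad φ p)) v = 0 := fun v => by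
      rw [hsymm, euclideanForm_comm]
      exact apply_add_fderiv_eq_zero_of_bernoulli euclideanForm_comm
        (hasFDerivAt_euclideanForm_grad hφ.self_of_nhds) hgrad.hasFDerivAt hbern v
    ext
    · simpa using horth (1, 0)
    · simpa using horth (0, 1)
  refine (eq_zero_or_eq_zero_of_symmetric_of_traceless (A := A.toLinearMap)
    (by simpa using hsymm (1, 0) (0, 1)) htrace hker).imp_left fun hA0 => ?_
  exact eq_neg_of_add_eq_zero_left (ContinuousLinearMap.coe_injective hA0)

theorem fderiv_grad_eq_neg_id {c : ℝ} (hs : IsOpen s) (hφ : ContDiffOn ℝ 2 φ s)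
    (hlap : ∀ q ∈ s, pd1 (pd1 φ) q + pd2 (pd2 φ) q + 2 = 0)
    (hbern : ∀ q ∈ s, φ q + (pd1 φ q ^ 2 + pd2 φ q ^ 2) / 2 = c) (hp : p ∈ s) :
    fderiv ℝ (grad φ) p = -.id ℝ (ℝ × ℝ) := by
  have hgrad : ContDiffOn ℝ 1 (grad φ) s := contDiffOn_grad hs hφ (by norm_num)
  have hdiff : ∀ q ∈ s, DifferentiableAt ℝ (grad φ) q := fun q hq =>
    (hgrad.differentiableOn one_ne_zero).differentiableAt (hs.mem_nhds hq)
  refine fderiv_eq_of_eventually_fderiv_eq_or_eq_const (c := 0)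
    ((hgrad.continuousOn_fderiv_of_isOpen hs le_rfl).continuousAt (hs.mem_nhds hp)) ?_ ?_
  · filter_upwards [hs.mem_nhds hp] with q hq
    refine fderiv_grad_eq_neg_id_or_grad_eq_zero (c := c) ?_ (hdiff q hq) (hlap q hq) ?_
    · filter_upwards [hs.mem_nhds hq] with r hr
      exact (hφ.differentiableOn two_ne_zero).differentiableAt (hs.mem_nhds hr)
    · filter_upwards [hs.mem_nhds hq] with r hr
      simpa [grad, sq] using hbern r hr
  · intro hzero
    have hlap_p := hlap p hp
    rw [pd1_pd1_add_pd2_pd2_eq_div_grad (hdiff p hp), hzero] at hlap_p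
    norm_num at hlap_p

end Grad

/-- Any `C²` pseudo-potential on a nonempty connected open set `Ω₀ ⊆ ℝ²` satisfying
`Δφ + 2 = 0` together with the pseudo-Bernoulli law `φ + ½|∇φ|² = const` is of the form
`φ(ξ) = −½|ξ|² + u₀·ξ + k`. -/
theorem stmt3
    (Ω₀ : Set (ℝ × ℝ)) (hne : Ω₀.Nonempty) (hconn : IsConnected Ω₀) (hopen : IsOpen Ω₀)
    (φ : ℝ × ℝ → ℝ)
    (hC2 : ContDiffOn ℝ 2 φ Ω₀)
    (hlap : ∀ p ∈ Ω₀, pd1 (pd1 φ) p + pd2 (pd2 φ) p + 2 = 0)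
    (hbern : ∃ c : ℝ, ∀ p ∈ Ω₀, φ p + (pd1 φ p ^ 2 + pd2 φ p ^ 2) / 2 = c) :
    ∃ u₀ : ℝ × ℝ, ∃ k : ℝ, ∀ p ∈ Ω₀,
      φ p = -(p.1 ^ 2 + p.2 ^ 2) / 2 + (u₀.1 * p.1 + u₀.2 * p.2) + k := by
  obtain ⟨c, hbern⟩ := hbern
  have hφ : ∀ p ∈ Ω₀, HasFDerivAt φ (euclideanForm (grad φ p)) p := fun p hp =>
    hasFDerivAt_euclideanForm_grad
      ((hC2.differentiableOn two_ne_zero).differentiableAt (hopen.mem_nhds hp))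
  have hgrad : ∀ p ∈ Ω₀, HasFDerivAt (grad φ) (-.id ℝ (ℝ × ℝ)) p := fun p hp => by
    rw [← fderiv_grad_eq_neg_id hopen hC2 hlap hbern hp]
    exact (((contDiffOn_grad hopen hC2 (m := 1) (by norm_num)).differentiableOn
      one_ne_zero).differentiableAt (hopen.mem_nhds hp)).hasFDerivAt
  obtain ⟨u₀, k, hquad⟩ := exists_eq_quadratic_of_hasFDerivAt_neg_id euclideanForm_comm hopen
    hconn.isPreconnected hφ hgrad
  exact ⟨u₀, k, fun p hp => by simpa [sq] using hquad p hp⟩
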